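/- arXiv:2401.06502 — 7 statements merged into one kernel-verified Lean document; each statement's English description precedes it below -/
import Mathlib

section
/- Let S_b be a set of N_s distinct integers and S_c a set of L distinct integers, and let K be a positive integer with K < min(N_s, L+1). Suppose condition (a) holds: for every choice of K+1 distinct angles φ_1,…,φ_{K+1} ∈ [-π/2, π/2), the manifold matrix A_{S_b}(φ) ∈ ℂ^{N_s×(K+1)} has rank K+1; and condition (b) holds: for every choice of K distinct angles ϑ_1,…,ϑ_K ∈ [-π/2, π/2), the manifold matrix A_{S_c}(ϑ) ∈ ℂ^{L×K} has rank K. Then for every choice of K distinct angles θ_1,…,θ_K ∈ [-π/2, π/2) and every x ∈ ℂ^K with all entries nonzero, the spatially smoothed matrix Y = A_{S_b}(θ)·diag(x)·A_{S_c}(θ)^T satisfies: rank(Y) = K, and for every φ ∈ [-π/2, π/2), the steering vector a_{S_b}(φ) lies in the column space of Y if and only if φ ∈ {θ_1,…,θ_K}. -/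
open Matrix

/-- Steering vector of a linear array with sensor positions `d` (in half-wavelength units)
at angle `θ`: entries `exp (i π d_n sin θ)`. -/
noncomputable def steer {N : ℕ} (d : Fin N → ℤ) (θ : ℝ) : Fin N → ℂ :=
  fun n => Complex.exp (Complex.I * (Real.pi : ℂ) * (d n : ℂ) * (Real.sin θ : ℂ))

/-- Array manifold matrix: the `k`-th column is the steering vector at angle `θ k`. -/
noncomputable def manifold {N K : ℕ} (d : Fin N → ℤ) (θ : Fin K → ℝ) :
    Matrix (Fin N) (Fin K) ℂ :=
  Matrix.of fun n k => steer d (θ k) n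

/-- The column space of a matrix, i.e. the range of `x ↦ M *ᵥ x`. -/
noncomputable def colSpace {m n : ℕ} (M : Matrix (Fin m) (Fin n) ℂ) :
    Submodule ℂ (Fin m → ℂ) :=
  LinearMap.range M.mulVecLin

/-- Angles are restricted to `[-π/2, π/2)`. -/
def angleDomain : Set ℝ := Set.Ico (-(Real.pi / 2)) (Real.pi / 2)

theorem manifold_li {N K : ℕ} (d : Fin N → ℤ) (θ : Fin K → ℝ)
    (h : (manifold d θ).rank = K) : LinearIndependent ℂ (fun k => steer d (θ k)) := by
  rw [linearIndependent_iff_card_eq_finrank_span, Set.finrank, Fintype.card_fin]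
  rw [Matrix.rank_eq_finrank_span_cols] at h
  exact h.symm

/-- Sufficiency direction of Theorem 1: conditions (a) and (b) imply that the spatially
smoothed matrix `Y` has rank `K` and its column space contains the steering vector
`a_{S_b}(φ)` exactly for `φ ∈ {θ_1, …, θ_K}`. -/
theorem stmt_0 {Ns L K : ℕ} (hKpos : 0 < K) (hKlt : K < min Ns (L + 1))
    (db : Fin Ns → ℤ) (dc : Fin L → ℤ)
    (hdb : Function.Injective db) (hdc : Function.Injective dc)
    (ha : ∀ φ : Fin (K + 1) → ℝ, (∀ i, φ i ∈ angleDomain) → Function.Injective φ →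
      (manifold db φ).rank = K + 1)
    (hb : ∀ ϑ : Fin K → ℝ, (∀ i, ϑ i ∈ angleDomain) → Function.Injective ϑ →
      (manifold dc ϑ).rank = K) :
    ∀ θ : Fin K → ℝ, (∀ k, θ k ∈ angleDomain) → Function.Injective θ →
    ∀ x : Fin K → ℂ, (∀ k, x k ≠ 0) →
      (manifold db θ * Matrix.diagonal x * (manifold dc θ)ᵀ).rank = K ∧
      ∀ φ ∈ angleDomain,
        (steer db φ ∈ colSpace (manifold db θ * Matrix.diagonal x * (manifold dc θ)ᵀ) ↔
          ∃ k, θ k = φ) := by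
  intro θ hθ hinj x hx
  have hcons : ∀ φ ∈ angleDomain, (¬ ∃ k, θ k = φ) →
      LinearIndependent ℂ (fun k => steer db (θ k)) ∧
      steer db φ ∉ Submodule.span ℂ (Set.range (fun k => steer db (θ k))) := by
    intro φ hφ hn
    have h1 := manifold_li db (Fin.cons φ θ : Fin (K + 1) → ℝ) (ha _
      (by
        intro i
        refine Fin.cases ?_ ?_ i
        · simpa using hφ
        · intro j
          simpa using hθ j)
      (Fin.cons_injective_iff.2 ⟨hn, hinj⟩))
    have h2 : (fun k => steer db ((Fin.cons φ θ : Fin (K + 1) → ℝ) k)) =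
        Fin.cons (steer db φ) (fun k => steer db (θ k)) := by
      funext k
      refine Fin.cases ?_ ?_ k
      · simp
      · intro j
        simp
    rw [h2] at h1
    exact linearIndependent_finCons.1 h1
  obtain ⟨φ₀, hφ₀, hn₀⟩ : ∃ φ ∈ angleDomain, φ ∉ Set.range θ :=
    (Set.Ico_infinite (by linarith [Real.pi_pos])).exists_notMem_finite (Set.finite_range θ)
  have hli := (hcons φ₀ hφ₀ hn₀).1
  have hsurjC : LinearMap.range ((manifold dc θ)ᵀ).mulVecLin = ⊤ := by
    apply Submodule.eq_top_of_finrank_eq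
    have := hb θ hθ hinj
    rw [← Matrix.rank_transpose] at this
    rw [Module.finrank_fin_fun]
    exact this
  have hsurjD : LinearMap.range (Matrix.diagonal x).mulVecLin = ⊤ := by
    rw [LinearMap.range_eq_top]
    intro y
    refine ⟨fun k => y k / x k, ?_⟩
    funext k
    simp [Matrix.mulVec_diagonal, mul_div_cancel₀, hx k]
  have hcol : LinearMap.range
      (manifold db θ * Matrix.diagonal x * (manifold dc θ)ᵀ).mulVecLin =
      Submodule.span ℂ (Set.range (fun k => steer db (θ k))) := by
    rw [Matrix.mulVecLin_mul, LinearMap.range_comp_of_range_eq_top _ hsurjC,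
      Matrix.mulVecLin_mul, LinearMap.range_comp_of_range_eq_top _ hsurjD,
      Matrix.range_mulVecLin]
    rfl
  refine ⟨?_, ?_⟩
  · rw [Matrix.rank, hcol]
    simpa using finrank_span_eq_card hli
  · intro φ hφ
    rw [colSpace, hcol]
    constructor
    · intro h
      by_contra hn
      exact (hcons φ hφ hn).2 h
    · rintro ⟨k, rfl⟩
      exact Submodule.subset_span ⟨k, rfl⟩
end

section
/- Let S_b be a set of N_s distinct integers and S_c a set of L distinct integers, and let K be a positive integer with K < min(N_s, L+1). Suppose that for every choice of K distinct angles θ_1,…,θ_K ∈ [-π/2, π/2) and every x ∈ ℂ^K with all entries nonzero, the spatially smoothed matrix Y = A_{S_b}(θ)·diag(x)·A_{S_c}(θ)^T satisfies: for every φ ∈ [-π/2, π/2), the steering vector a_{S_b}(φ) lies in the column space of Y if and only if φ ∈ {θ_1,…,θ_K}. Then necessarily condition (a) holds: for every K+1 distinct angles φ_1,…,φ_{K+1} ∈ [-π/2, π/2), rank A_{S_b}(φ) = K+1; and condition (b) holds: for every K distinct angles ϑ_1,…,ϑ_K ∈ [-π/2, π/2), rank A_{S_c}(ϑ) = K. 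-/
open Matrix

theorem rank_manifold_of_li {N K : ℕ} (d : Fin N → ℤ) (θ : Fin K → ℝ)
    (h : LinearIndependent ℂ (fun k => steer d (θ k))) : (manifold d θ).rank = K := by
  rw [Matrix.rank_eq_finrank_span_cols]
  have : (manifold d θ).col = fun k => steer d (θ k) := rfl
  rw [this, finrank_span_eq_card h, Fintype.card_fin]

/-- Necessity direction of Theorem 1: if for every configuration of `K` distinct DOAs and
nonzero amplitudes the column space of the spatially smoothed matrix `Y` contains the
steering vector `a_{S_b}(φ)` exactly for `φ ∈ {θ_1, …, θ_K}`, then conditions (a) and (b)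
must hold. -/
theorem stmt_1 {Ns L K : ℕ} (hKpos : 0 < K) (hKlt : K < min Ns (L + 1))
    (db : Fin Ns → ℤ) (dc : Fin L → ℤ)
    (hdb : Function.Injective db) (hdc : Function.Injective dc)
    (hmusic : ∀ θ : Fin K → ℝ, (∀ k, θ k ∈ angleDomain) → Function.Injective θ →
      ∀ x : Fin K → ℂ, (∀ k, x k ≠ 0) →
      ∀ φ ∈ angleDomain,
        (steer db φ ∈ colSpace (manifold db θ * Matrix.diagonal x * (manifold dc θ)ᵀ) ↔
          ∃ k, θ k = φ)) :
    (∀ φ : Fin (K + 1) → ℝ, (∀ i, φ i ∈ angleDomain) → Function.Injective φ →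
      (manifold db φ).rank = K + 1) ∧
    (∀ ϑ : Fin K → ℝ, (∀ i, ϑ i ∈ angleDomain) → Function.Injective ϑ →
      (manifold dc ϑ).rank = K) := by
  have key : ∀ θ : Fin K → ℝ, (∀ k, θ k ∈ angleDomain) → Function.Injective θ →
      Submodule.span ℂ (Set.range fun k => steer db (θ k)) ≤
        colSpace (manifold db θ * Matrix.diagonal (fun _ : Fin K => (1 : ℂ)) * (manifold dc θ)ᵀ) := by
    intro θ h1 h2
    rw [Submodule.span_le]
    rintro _ ⟨k, rfl⟩
    exact (hmusic θ h1 h2 (fun _ => 1) (fun _ => one_ne_zero) (θ k) (h1 k)).2 ⟨k, rfl⟩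
  have hli : ∀ φ : Fin (K + 1) → ℝ, (∀ i, φ i ∈ angleDomain) → Function.Injective φ →
      LinearIndependent ℂ (fun k => steer db (φ k)) := by
    intro φ h1 h2
    rw [linearIndependent_iff_notMem_span]
    intro j hj
    have hθ1 : ∀ k, (φ ∘ j.succAbove) k ∈ angleDomain := fun k => h1 _
    have hθ2 : Function.Injective (φ ∘ j.succAbove) :=
      h2.comp Fin.succAbove_right_injective
    have hmem : steer db (φ j) ∈
        Submodule.span ℂ (Set.range fun k => steer db ((φ ∘ j.succAbove) k)) := by
      refine Submodule.span_mono ?_ hj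
      rintro _ ⟨i, hi, rfl⟩
      have hne : i ≠ j := by simpa using hi
      obtain ⟨k, rfl⟩ := Fin.exists_succAbove_eq hne
      exact ⟨k, rfl⟩
    obtain ⟨k, hk⟩ := (hmusic _ hθ1 hθ2 (fun _ => 1) (fun _ => one_ne_zero) (φ j) (h1 j)).1
      (key _ hθ1 hθ2 hmem)
    exact Fin.succAbove_ne j k (h2 hk)
  refine ⟨fun φ h1 h2 => rank_manifold_of_li db φ (hli φ h1 h2), ?_⟩
  intro θ h1 h2
  have hinf : angleDomain.Infinite := Set.Ico_infinite (by linarith [Real.pi_pos])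
  obtain ⟨α, hα, hαn⟩ := hinf.exists_notMem_finite (Set.finite_range θ)
  have hL := hli (Fin.cons α θ) (fun i => by
    refine Fin.cases ?_ (fun k => ?_) i
    · simpa using hα
    · simpa using h1 k) (Fin.cons_injective_iff.2 ⟨hαn, h2⟩)
  have hL2 : LinearIndependent ℂ (fun k => steer db (θ k)) := by
    have := hL.comp Fin.succ (Fin.succ_injective K)
    simpa [Function.comp_def] using this
  apply le_antisymm
  · simpa using (manifold dc θ).rank_le_width
  · have h3 := Submodule.finrank_mono (key θ h1 h2)
    rw [finrank_span_eq_card hL2, Fintype.card_fin] at h3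
    have h4 := Matrix.rank_mul_le_right
      (manifold db θ * Matrix.diagonal (fun _ : Fin K => (1 : ℂ))) (manifold dc θ)ᵀ
    rw [Matrix.rank_transpose] at h4
    exact le_trans h3 h4
end

section
/- Let d_1, d_2 be positive integers with d_1 < d_2 and let D = {0, d_1, d_2}. Then the 3×2 manifold matrix A_D(θ) has rank 2 (full column rank) for every pair of distinct angles θ_1, θ_2 ∈ [-π/2, π/2) if and only if gcd(d_1, d_2) = 1. -/
open Matrix

lemma aux_exp (d : ℕ) (x y : ℝ)
    (h : Complex.exp (Complex.I * (Real.pi : ℂ) * ((d : ℤ) : ℂ) * (x : ℂ)) =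
      Complex.exp (Complex.I * (Real.pi : ℂ) * ((d : ℤ) : ℂ) * (y : ℂ))) :
    ∃ n : ℤ, (d : ℝ) * (x - y) = 2 * n := by
  obtain ⟨n, hn⟩ := Complex.exp_eq_exp_iff_exists_int.1 h
  refine ⟨n, ?_⟩
  have hp : (Complex.I * (Real.pi : ℂ)) ≠ 0 :=
    mul_ne_zero Complex.I_ne_zero (by exact_mod_cast Real.pi_ne_zero)
  have : ((d : ℂ)) * ((x : ℂ) - y) = 2 * n := by
    apply mul_left_cancel₀ hp
    push_cast at hn
    linear_combination hn
  exact_mod_cast this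

theorem stmt_9 (d₁ d₂ : ℕ) (h1 : 0 < d₁) (h12 : d₁ < d₂) :
    (∀ θ : Fin 2 → ℝ, (∀ k, θ k ∈ angleDomain) → Function.Injective θ →
      (manifold ![(0 : ℤ), (d₁ : ℤ), (d₂ : ℤ)] θ).rank = 2) ↔ Nat.gcd d₁ d₂ = 1 := by
  constructor
  · intro H
    by_contra hg
    have hg0 : 0 < Nat.gcd d₁ d₂ := Nat.gcd_pos_of_pos_left _ h1
    have hg2 : 2 ≤ Nat.gcd d₁ d₂ := by omega
    obtain ⟨a, ha⟩ := Nat.gcd_dvd_left d₁ d₂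
    obtain ⟨b, hb⟩ := Nat.gcd_dvd_right d₁ d₂
    generalize Nat.gcd d₁ d₂ = g at *
    have hgR : (2 : ℝ) ≤ g := by exact_mod_cast hg2
    have hgp : (0 : ℝ) < 2 / g := by positivity
    have hgl : (2 : ℝ) / g ≤ 1 := by rw [div_le_one (by linarith)]; exact hgR
    have hs : Real.sin (Real.arcsin (-1 + 2 / g)) = -1 + 2 / g :=
      Real.sin_arcsin (by linarith) (by linarith)
    have hs0 : Real.sin (-(Real.pi / 2)) = -1 := by simp
    have hpi := Real.pi_pos
    have key := H ![-(Real.pi / 2), Real.arcsin (-1 + 2 / g)] (by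
      intro k
      fin_cases k
      · exact ⟨le_refl _, by simp; linarith⟩
      · exact ⟨Real.neg_pi_div_two_le_arcsin _, Real.arcsin_lt_pi_div_two.2 (by linarith)⟩) (by
      have hne : -(Real.pi / 2) ≠ Real.arcsin (-1 + 2 / g) := by
        intro h
        rw [← h, hs0] at hs
        linarith
      intro i j hij
      fin_cases i <;> fin_cases j <;> simp at hij ⊢
      · linarith
      · linarith)
    have hcol : ∀ c e : ℕ, c = g * e →
        Complex.exp (Complex.I * (Real.pi : ℂ) * (c : ℂ) * ((-1 + 2 / g : ℝ) : ℂ)) =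
        Complex.exp (Complex.I * (Real.pi : ℂ) * (c : ℂ) * ((-1 : ℝ) : ℂ)) := by
      intro c e hc
      rw [Complex.exp_eq_exp_iff_exists_int]
      refine ⟨e, ?_⟩
      have : (g : ℂ) ≠ 0 := by
        have : g ≠ 0 := by omega
        exact_mod_cast this
      subst hc
      push_cast
      field_simp
    have hM : manifold ![(0 : ℤ), (d₁ : ℤ), (d₂ : ℤ)] ![-(Real.pi / 2), Real.arcsin (-1 + 2 / g)]
        = Matrix.vecMulVec (steer ![(0 : ℤ), (d₁ : ℤ), (d₂ : ℤ)] (-(Real.pi / 2))) (fun _ => 1) := by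
      have e1 := hcol d₁ a ha
      have e2 := hcol d₂ b hb
      ext i j
      simp only [manifold, steer, Matrix.of_apply, Matrix.vecMulVec_apply, mul_one]
      fin_cases j
      · rfl
      · show Complex.exp (_ * ((Real.sin (Real.arcsin (-1 + 2 / g)) : ℝ) : ℂ)) = _
        rw [hs, hs0]
        fin_cases i
        · simp
        · simpa using e1
        · simpa using e2
    rw [hM] at key
    have := Matrix.rank_vecMulVec_le (steer ![(0 : ℤ), (d₁ : ℤ), (d₂ : ℤ)] (-(Real.pi / 2)))
      (fun _ : Fin 2 => (1 : ℂ))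
    erw [key] at this
    omega
  · intro hg θ hθ hinj
    rw [← Matrix.rank_transpose]
    have hli : LinearIndependent ℂ (manifold ![(0 : ℤ), (d₁ : ℤ), (d₂ : ℤ)] θ)ᵀ.row := by
      have hrow : (manifold ![(0 : ℤ), (d₁ : ℤ), (d₂ : ℤ)] θ)ᵀ.row =
          ![steer ![(0 : ℤ), (d₁ : ℤ), (d₂ : ℤ)] (θ 0),
            steer ![(0 : ℤ), (d₁ : ℤ), (d₂ : ℤ)] (θ 1)] := by
        funext i
        fin_cases i <;> rfl
      rw [hrow]
      rw [LinearIndependent.pair_iff]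
      intro s t hst
      have q0 := congrFun hst 0
      have q1 := congrFun hst 1
      have q2 := congrFun hst 2
      simp only [manifold, steer, Pi.add_apply, Pi.smul_apply, Matrix.transpose_apply,
        Matrix.of_apply, smul_eq_mul, Pi.zero_apply, Matrix.cons_val_zero, Matrix.cons_val_one,
        Matrix.cons_val] at q0 q1 q2
      simp only [Int.cast_zero, mul_zero, zero_mul, Complex.exp_zero, mul_one] at q0
      have ht : t = -s := by linear_combination q0
      subst ht
      by_cases hs : s = 0
      · simp [hs]
      exfalso
      obtain ⟨n, hn⟩ := aux_exp d₁ (Real.sin (θ 0)) (Real.sin (θ 1))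
        (mul_left_cancel₀ hs (by linear_combination q1))
      obtain ⟨m, hm⟩ := aux_exp d₂ (Real.sin (θ 0)) (Real.sin (θ 1))
        (mul_left_cancel₀ hs (by linear_combination q2))
      have hb := Nat.gcd_eq_gcd_ab d₁ d₂
      rw [hg] at hb
      have hbR : (1 : ℝ) = d₁ * (Nat.gcdA d₁ d₂ : ℤ) + d₂ * (Nat.gcdB d₁ d₂ : ℤ) := by
        exact_mod_cast hb
      have hk : Real.sin (θ 0) - Real.sin (θ 1) =
          2 * ((n * Nat.gcdA d₁ d₂ + m * Nat.gcdB d₁ d₂ : ℤ) : ℝ) := by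
        push_cast
        linear_combination (Real.sin (θ 0) - Real.sin (θ 1)) * hbR +
          (Nat.gcdA d₁ d₂ : ℝ) * hn + (Nat.gcdB d₁ d₂ : ℝ) * hm
      generalize (n * Nat.gcdA d₁ d₂ + m * Nat.gcdB d₁ d₂ : ℤ) = k at hk
      have hlt : ∀ i, Real.sin (θ i) < 1 := by
        intro i
        rw [← Real.sin_pi_div_two]
        exact Real.sin_lt_sin_of_lt_of_le_pi_div_two (hθ i).1 le_rfl (hθ i).2
      have a0 := hlt 0
      have a1 := hlt 1
      have b0 := Real.neg_one_le_sin (θ 0)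
      have b1 := Real.neg_one_le_sin (θ 1)
      have k1 : k < 1 := by
        have : (k : ℝ) < 1 := by linarith
        exact_mod_cast this
      have k2 : -1 < k := by
        have : (-1 : ℝ) < k := by linarith
        exact_mod_cast this
      have k0 : k = 0 := by omega
      subst k0
      have he : θ 0 = θ 1 := Real.injOn_sin ⟨(hθ 0).1, (hθ 0).2.le⟩ ⟨(hθ 1).1, (hθ 1).2.le⟩
        (by simp at hk; linarith)
      exact absurd (hinj he) (by decide)
    exact hli.rank_matrix.trans (Fintype.card_fin 2)
end

section
/- Let d_1, d_2 be positive integers with d_1 < d_2 and gcd(d_1, d_2) = 1, and let S_c be any finite set of distinct integers with {0, d_1, d_2} ⊆ S_c. Then condition (b) holds for K = 2: for every pair of distinct angles ϑ_1, ϑ_2 ∈ [-π/2, π/2), the manifold matrix A_{S_c}(ϑ) ∈ ℂ^{|S_c|×2} has rank 2. -/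
open Matrix

/-- If the array `S_c` contains `{0, d₁, d₂}` with `0 < d₁ < d₂` coprime, then condition
(b) holds for `K = 2`: the manifold matrix on any two distinct angles in `[-π/2, π/2)`
has full column rank `2`. -/
theorem stmt_10 {L : ℕ} (d₁ d₂ : ℕ) (h1 : 0 < d₁) (h12 : d₁ < d₂)
    (hgcd : Nat.gcd d₁ d₂ = 1)
    (dc : Fin L → ℤ) (hdc : Function.Injective dc)
    (h0 : (0 : ℤ) ∈ Set.range dc) (hd1 : (d₁ : ℤ) ∈ Set.range dc)
    (hd2 : (d₂ : ℤ) ∈ Set.range dc) :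
    ∀ ϑ : Fin 2 → ℝ, (∀ k, ϑ k ∈ angleDomain) → Function.Injective ϑ →
      (manifold dc ϑ).rank = 2 := by
  intro ϑ hϑ hinj
  obtain ⟨i0, h0⟩ := h0
  obtain ⟨i1, hi1⟩ := hd1
  obtain ⟨i2, hi2⟩ := hd2
  have key : ∀ v : Fin 2 → ℂ, manifold dc ϑ *ᵥ v = 0 → v = 0 := by
    intro v hv
    have e0 := congrFun hv i0
    have e1 := congrFun hv i1
    have e2 := congrFun hv i2
    simp only [manifold, steer, Matrix.mulVec, dotProduct, Fin.sum_univ_two, Matrix.of_apply,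
      h0, hi1, hi2, Pi.zero_apply, Int.cast_zero, mul_zero, zero_mul, Complex.exp_zero,
      one_mul, Int.cast_natCast] at e0 e1 e2
    have hw : v 1 = - v 0 := by linear_combination e0
    by_cases hv0 : v 0 = 0
    · ext k
      fin_cases k
      · exact hv0
      · simp [hw, hv0]
    exfalso
    rw [hw] at e1 e2
    have aux : ∀ m : ℕ, Complex.exp (Complex.I * (Real.pi : ℂ) * (m : ℂ) * (Real.sin (ϑ 0) : ℂ)) * v 0
        + Complex.exp (Complex.I * (Real.pi : ℂ) * (m : ℂ) * (Real.sin (ϑ 1) : ℂ)) * (- v 0) = 0 →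
        ∃ n : ℤ, (m : ℝ) * (Real.sin (ϑ 0) - Real.sin (ϑ 1)) = 2 * n := by
      intro m h
      have h' : Complex.exp (Complex.I * (Real.pi : ℂ) * (m : ℂ) * (Real.sin (ϑ 0) : ℂ))
          = Complex.exp (Complex.I * (Real.pi : ℂ) * (m : ℂ) * (Real.sin (ϑ 1) : ℂ)) := by
        apply mul_right_cancel₀ hv0
        linear_combination h
      obtain ⟨n, hn⟩ := Complex.exp_eq_exp_iff_exists_int.mp h'
      refine ⟨n, ?_⟩
      have hpi : Complex.I * (Real.pi : ℂ) ≠ 0 :=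
        mul_ne_zero Complex.I_ne_zero (by exact_mod_cast Real.pi_ne_zero)
      have h3 : ((m : ℂ) * ((Real.sin (ϑ 0) : ℂ) - (Real.sin (ϑ 1) : ℂ))) = 2 * (n : ℂ) := by
        apply mul_left_cancel₀ hpi
        linear_combination hn
      exact_mod_cast h3
    obtain ⟨a, ha⟩ := aux d₁ e1
    obtain ⟨b, hb⟩ := aux d₂ e2
    have bez := Nat.gcd_eq_gcd_ab d₁ d₂
    rw [hgcd] at bez
    have bezR : (1 : ℝ) = d₁ * (Nat.gcdA d₁ d₂ : ℝ) + d₂ * (Nat.gcdB d₁ d₂ : ℝ) := by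
      exact_mod_cast bez
    obtain ⟨c, hc⟩ : ∃ c : ℤ, Real.sin (ϑ 0) - Real.sin (ϑ 1) = 2 * c := by
      refine ⟨a * Nat.gcdA d₁ d₂ + b * Nat.gcdB d₁ d₂, ?_⟩
      push_cast
      linear_combination (Real.sin (ϑ 0) - Real.sin (ϑ 1)) * bezR
        + (Nat.gcdA d₁ d₂ : ℝ) * ha + (Nat.gcdB d₁ d₂ : ℝ) * hb
    have hlt : ∀ k, Real.sin (ϑ k) < 1 := by
      intro k
      have h := hϑ k
      have := Real.strictMonoOn_sin (Set.Ico_subset_Icc_self h)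
        (Set.right_mem_Icc.mpr (by linarith [Real.pi_pos])) h.2
      rwa [Real.sin_pi_div_two] at this
    have hge := fun k => Real.neg_one_le_sin (ϑ k)
    have c1 : (c : ℝ) < 1 := by linarith [hlt 0, hge 1]
    have c2 : (-1 : ℝ) < c := by linarith [hlt 1, hge 0]
    have c1' : c < 1 := by exact_mod_cast c1
    have c2' : -1 < c := by exact_mod_cast c2
    have c0 : c = 0 := by omega
    rw [c0, Int.cast_zero, mul_zero] at hc
    have := hinj (Real.injOn_sin (Set.Ico_subset_Icc_self (hϑ 0))
      (Set.Ico_subset_Icc_self (hϑ 1)) (sub_eq_zero.mp hc))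
    exact absurd this (by decide)
  have hin : Function.Injective (manifold dc ϑ).mulVecLin := by
    rw [injective_iff_map_eq_zero]
    intro v hv
    exact key v (by simpa using hv)
  rw [Matrix.rank, LinearMap.finrank_range_of_inj hin]
  simp
end

section
/- Let S_b = {0, 3, 5, 7}. Then condition (a) holds for K = 2: for every choice of 3 distinct angles φ_1, φ_2, φ_3 ∈ [-π/2, π/2), the 4×3 manifold matrix A_{S_b}(φ) with entries exp(iπ d sin φ_k), d ∈ {0, 3, 5, 7}, has rank 3. -/
open Matrix

theorem aux_sq {a b c p q r : ℂ} (hc : c ≠ 0) (h1 : c ^ 2 ≠ a ^ 2) (h2 : c ^ 2 ≠ b ^ 2)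
    (e3 : a ^ 3 * p + b ^ 3 * q + c ^ 3 * r = 0)
    (e5 : a ^ 5 * p + b ^ 5 * q + c ^ 5 * r = 0)
    (e7 : a ^ 7 * p + b ^ 7 * q + c ^ 7 * r = 0) : r = 0 := by
  have h : (c ^ 3 * ((c ^ 2 - a ^ 2) * (c ^ 2 - b ^ 2))) * r = 0 := by
    linear_combination e7 - (a ^ 2 + b ^ 2) * e5 + a ^ 2 * b ^ 2 * e3
  exact (mul_eq_zero.1 h).resolve_left
    (mul_ne_zero (pow_ne_zero _ hc) (mul_ne_zero (sub_ne_zero.2 h1) (sub_ne_zero.2 h2)))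

theorem aux_pair {a b p q : ℂ} (ha : a ≠ 0) (hab : a ≠ b)
    (e0 : p + q = 0) (e3 : a ^ 3 * p + b ^ 3 * q = 0)
    (e5 : a ^ 5 * p + b ^ 5 * q = 0) : p = 0 ∧ q = 0 := by
  have hp : p = 0 := by
    by_contra hp
    have h3 : a ^ 3 = b ^ 3 := mul_right_cancel₀ hp (by linear_combination e3 - b ^ 3 * e0)
    have h5 : a ^ 5 = b ^ 5 := mul_right_cancel₀ hp (by linear_combination e5 - b ^ 5 * e0)
    apply hab
    apply mul_right_cancel₀ (pow_ne_zero 5 ha)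
    linear_combination (a ^ 3 + b ^ 3) * h3 - b * h5
  exact ⟨hp, by simpa [hp] using e0⟩

theorem aux_last {a b c p q r : ℂ} (ha : a ≠ 0) (hc : c ≠ 0) (hab : a ≠ b)
    (h1 : c ^ 2 ≠ a ^ 2) (h2 : c ^ 2 ≠ b ^ 2)
    (e0 : p + q + r = 0)
    (e3 : a ^ 3 * p + b ^ 3 * q + c ^ 3 * r = 0)
    (e5 : a ^ 5 * p + b ^ 5 * q + c ^ 5 * r = 0)
    (e7 : a ^ 7 * p + b ^ 7 * q + c ^ 7 * r = 0) : p = 0 ∧ q = 0 ∧ r = 0 := by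
  have hr := aux_sq hc h1 h2 e3 e5 e7
  subst hr
  obtain ⟨hp, hq⟩ := aux_pair ha hab (by simpa using e0) (by simpa using e3) (by simpa using e5)
  exact ⟨hp, hq, rfl⟩

theorem aux_all {a b c p q r : ℂ} (ha : a ≠ 0) (hb : b ≠ 0) (hc : c ≠ 0)
    (hab : a ≠ b) (hac : a ≠ c) (hbc : b ≠ c)
    (e0 : p + q + r = 0)
    (e3 : a ^ 3 * p + b ^ 3 * q + c ^ 3 * r = 0)
    (e5 : a ^ 5 * p + b ^ 5 * q + c ^ 5 * r = 0)
    (e7 : a ^ 7 * p + b ^ 7 * q + c ^ 7 * r = 0) : p = 0 ∧ q = 0 ∧ r = 0 := by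
  by_cases h1 : c ^ 2 = a ^ 2
  · have hca : c = -a := (sq_eq_sq_iff_eq_or_eq_neg.1 h1).resolve_left (Ne.symm hac)
    have h2 : b ^ 2 ≠ a ^ 2 := by
      intro h
      rcases sq_eq_sq_iff_eq_or_eq_neg.1 h with h | h
      · exact hab h.symm
      · exact hbc (h.trans hca.symm)
    obtain ⟨x, y, z⟩ := aux_last (p := p) (q := r) (r := q) ha hb hac h2 (h1 ▸ h2)
      (by linear_combination e0) (by linear_combination e3)
      (by linear_combination e5) (by linear_combination e7)
    exact ⟨x, z, y⟩
  by_cases h2 : c ^ 2 = b ^ 2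
  · obtain ⟨x, y, z⟩ := aux_last (p := b * 0 + q) (q := r) (r := p) hb ha hbc
      (fun h => h1 (h2.trans h.symm)) (fun h => h1 h.symm)
      (by linear_combination e0) (by linear_combination e3)
      (by linear_combination e5) (by linear_combination e7)
    exact ⟨z, by simpa using x, y⟩
  exact aux_last ha hc hab h1 h2 e0 e3 e5 e7

theorem aux_inj {s t : ℝ} (hs : s ∈ angleDomain) (ht : t ∈ angleDomain) (hst : s ≠ t) :
    Complex.exp (Complex.I * (Real.pi : ℂ) * (Real.sin s : ℂ)) ≠
      Complex.exp (Complex.I * (Real.pi : ℂ) * (Real.sin t : ℂ)) := by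
  intro h
  obtain ⟨n, hn⟩ := Complex.exp_eq_exp_iff_exists_int.1 h
  have hpi : (Real.pi : ℂ) ≠ 0 := by exact_mod_cast Real.pi_ne_zero
  have h1 : (Real.sin s : ℂ) = Real.sin t + n * 2 := by
    apply mul_left_cancel₀ (mul_ne_zero Complex.I_ne_zero hpi)
    linear_combination hn
  have h2 : Real.sin s = Real.sin t + n * 2 := by exact_mod_cast h1
  have key : ∀ u ∈ angleDomain, Real.sin u < 1 := by
    intro u hu
    rw [← Real.sin_pi_div_two]
    exact Real.sin_lt_sin_of_lt_of_le_pi_div_two hu.1 le_rfl hu.2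
  have a1 := key s hs
  have a2 := key t ht
  have a3 := Real.neg_one_le_sin s
  have a4 := Real.neg_one_le_sin t
  have b1 : (n : ℝ) < 1 := by linarith
  have b2 : (-1 : ℝ) < n := by linarith
  have hn0 : n = 0 := by
    have : n < 1 := by exact_mod_cast b1
    have : -1 < n := by exact_mod_cast b2
    omega
  subst hn0
  exact hst (Real.injOn_sin ⟨hs.1, hs.2.le⟩ ⟨ht.1, ht.2.le⟩ (by simpa using h2))

/-- For `S_b = {0, 3, 5, 7}`, condition (a) holds for `K = 2`: for every three distinct
angles in `[-π/2, π/2)` the `4 × 3` manifold matrix has rank `3`. -/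
theorem stmt_11 :
    ∀ φ : Fin 3 → ℝ, (∀ i, φ i ∈ angleDomain) → Function.Injective φ →
      (manifold ![(0 : ℤ), 3, 5, 7] φ).rank = 3 := by
  intro φ hφ hinj
  have hz : ∀ i j, i ≠ j → _ := fun i j hij =>
    aux_inj (hφ i) (hφ j) (fun h => hij (hinj h))
  have hp : ∀ (n : ℕ) (x : ℂ), Complex.exp (Complex.I * (Real.pi : ℂ) * (n : ℂ) * x) =
      Complex.exp (Complex.I * (Real.pi : ℂ) * x) ^ n := by
    intro n x
    rw [← Complex.exp_nat_mul]
    congr 1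
    ring
  have h3 := hp 3
  have h5 := hp 5
  have h7 := hp 7
  push_cast at h3 h5 h7
  have hI : Function.Injective (manifold ![(0 : ℤ), 3, 5, 7] φ).mulVecLin := by
    rw [injective_iff_map_eq_zero]
    intro v hv
    have e0 := congrFun hv 0
    have e3 := congrFun hv 1
    have e5 := congrFun hv 2
    have e7 := congrFun hv 3
    simp [Matrix.mulVec, dotProduct, Fin.sum_univ_three, manifold, steer,
      -Complex.ofReal_sin, h3, h5, h7] at e0 e3 e5 e7
    obtain ⟨x, y, z⟩ := aux_all (Complex.exp_ne_zero _) (Complex.exp_ne_zero _)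
      (Complex.exp_ne_zero _) (hz 0 1 (by decide)) (hz 0 2 (by decide)) (hz 1 2 (by decide))
      e0 e3 e5 e7
    funext i
    fin_cases i
    · exact x
    · exact y
    · exact z
  rw [Matrix.rank, LinearMap.finrank_range_of_inj hI]
  simp
end

section
/- Let S_b = {0, 3, 5, 7} and S_c = {0, 4, 9}. Then for every pair of distinct angles θ_1, θ_2 ∈ [-π/2, π/2) and every x ∈ ℂ^2 with both entries nonzero, the spatially smoothed matrix Y = A_{S_b}(θ)·diag(x)·A_{S_c}(θ)^T ∈ ℂ^{4×3} satisfies: rank(Y) = 2, and for every φ ∈ [-π/2, π/2), the steering vector a_{S_b}(φ) lies in the column space of Y if and only if φ ∈ {θ_1, θ_2}. In particular, spatial smoothing identifies K = 2 targets using sparse sub-arrays S_b and S_c, neither of which contains a ULA segment with unit spacing. -/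
open Matrix

lemma aux_z_inj {a b : ℝ} (ha : a ∈ angleDomain) (hb : b ∈ angleDomain)
    (h : Complex.exp (Complex.I * (Real.pi : ℂ) * (Real.sin a : ℂ)) =
      Complex.exp (Complex.I * (Real.pi : ℂ) * (Real.sin b : ℂ))) : a = b := by
  obtain ⟨ha1, ha2⟩ := ha
  obtain ⟨hb1, hb2⟩ := hb
  have bound : ∀ c : ℝ, -(Real.pi/2) ≤ c → c < Real.pi/2 → -1 ≤ Real.sin c ∧ Real.sin c < 1 := by
    intro c h1 h2
    refine ⟨Real.neg_one_le_sin c, ?_⟩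
    rw [← Real.sin_pi_div_two]
    exact Real.sin_lt_sin_of_lt_of_le_pi_div_two h1 le_rfl h2
  obtain ⟨h1, h2⟩ := bound a ha1 ha2
  obtain ⟨h3, h4⟩ := bound b hb1 hb2
  rw [Complex.exp_eq_exp_iff_exists_int] at h
  obtain ⟨n, hn⟩ := h
  have hpi : (Real.pi : ℂ) ≠ 0 := by exact_mod_cast Real.pi_ne_zero
  have e : (Real.sin a : ℂ) = (Real.sin b : ℂ) + n * 2 := by
    apply mul_left_cancel₀ (mul_ne_zero Complex.I_ne_zero hpi)
    rw [hn]; ring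
  have e' : Real.sin a = Real.sin b + n * 2 := by exact_mod_cast e
  have n1 : (n : ℝ) < 1 := by linarith
  have n2 : (-1 : ℝ) < n := by linarith
  have n1' : n < 1 := by exact_mod_cast n1
  have n2' : -1 < n := by exact_mod_cast n2
  have n0 : n = 0 := by omega
  rw [n0] at e'
  exact Real.injOn_sin ⟨ha1, ha2.le⟩ ⟨hb1, hb2.le⟩ (by simpa using e')

lemma aux_pow (d : ℕ) (s : ℝ) : Complex.exp (Complex.I * (Real.pi : ℂ) * (d : ℂ) * (s : ℂ)) =
    Complex.exp (Complex.I * (Real.pi : ℂ) * (s : ℂ)) ^ d := by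
  rw [← Complex.exp_nat_mul]; congr 1; ring

lemma aux_half {u v w α β : ℂ} (hu : u ≠ 0) (hv : v ≠ 0) (hs : w ^ 2 = u ^ 2)
    (e0 : α + β = 1) (e3 : α * u ^ 3 + β * v ^ 3 = w ^ 3)
    (e5 : α * u ^ 5 + β * v ^ 5 = w ^ 5) : w = u ∨ w = v := by
  rcases sq_eq_sq_iff_eq_or_eq_neg.1 hs with h | h
  · exact Or.inl h
  have h1 : β * v ^ 3 * (v ^ 2 - u ^ 2) = 0 := by
    subst h; linear_combination e5 - u ^ 2 * e3
  rcases mul_eq_zero.1 h1 with h2 | h2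
  · have hb : β = 0 := by simpa [hv] using h2
    subst hb
    have ha : α = 1 := by simpa using e0
    subst ha; subst h
    exfalso
    have : u ^ 3 = 0 := by linear_combination e3 / 2
    exact hu (by simpa using this)
  · rcases sq_eq_sq_iff_eq_or_eq_neg.1 (sub_eq_zero.1 h2) with h3 | h3
    · subst h3
      have : w ^ 3 = v ^ 3 := by linear_combination -e3 + v ^ 3 * e0
      exfalso; subst h
      have : v ^ 3 = 0 := by linear_combination - this / 2
      exact hu (by simpa using this)
    · right; rw [h, h3]

lemma aux_mem {u v w α β : ℂ} (hu : u ≠ 0) (hv : v ≠ 0) (hw : w ≠ 0)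
    (e0 : α + β = 1) (e3 : α * u ^ 3 + β * v ^ 3 = w ^ 3)
    (e5 : α * u ^ 5 + β * v ^ 5 = w ^ 5) (e7 : α * u ^ 7 + β * v ^ 7 = w ^ 7) :
    w = u ∨ w = v := by
  have h : w ^ 3 * ((w ^ 2 - u ^ 2) * (w ^ 2 - v ^ 2)) = 0 := by
    linear_combination (u ^ 2 + v ^ 2) * e5 - e7 - u ^ 2 * v ^ 2 * e3
  rcases mul_eq_zero.1 ((mul_eq_zero.1 h).resolve_left (pow_ne_zero 3 hw)) with h | h
  · exact aux_half hu hv (sub_eq_zero.1 h) e0 e3 e5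
  · exact (aux_half hv hu (sub_eq_zero.1 h) (by rw [add_comm]; exact e0)
      (by rw [add_comm]; exact e3) (by rw [add_comm]; exact e5)).symm

lemma aux_b {u v α β : ℂ} (hu : u ≠ 0) (huv : u ≠ v)
    (e0 : α + β = 0) (e3 : α * u ^ 3 + β * v ^ 3 = 0)
    (e5 : α * u ^ 5 + β * v ^ 5 = 0) : α = 0 ∧ β = 0 := by
  have hb : β = -α := by linear_combination e0
  subst hb
  by_cases ha : α = 0
  · simp [ha]
  exfalso
  have h3 : u ^ 3 = v ^ 3 := mul_left_cancel₀ ha (by linear_combination e3)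
  have h5 : u ^ 5 = v ^ 5 := mul_left_cancel₀ ha (by linear_combination e5)
  apply huv
  apply mul_left_cancel₀ (pow_ne_zero 5 hu)
  linear_combination (u ^ 3 + v ^ 3) * h3 - v * h5

lemma aux_c {u v : ℂ} (hu : u ≠ 0) (huv : u ≠ v) (p q : ℂ) :
    ∃ a b c : ℂ, a + b * u ^ 4 + c * u ^ 9 = p ∧ a + b * v ^ 4 + c * v ^ 9 = q := by
  by_cases h4 : u ^ 4 = v ^ 4
  · have h9 : u ^ 9 - v ^ 9 ≠ 0 := by
      intro h
      apply huv
      apply mul_left_cancel₀ (pow_ne_zero 8 hu)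
      linear_combination h - v * (u ^ 4 + v ^ 4) * h4
    refine ⟨p - (p - q) / (u ^ 9 - v ^ 9) * u ^ 9, 0, (p - q) / (u ^ 9 - v ^ 9), by ring, ?_⟩
    field_simp; ring
  · have h4 : u ^ 4 - v ^ 4 ≠ 0 := sub_ne_zero.2 h4
    refine ⟨p - (p - q) / (u ^ 4 - v ^ 4) * u ^ 4, (p - q) / (u ^ 4 - v ^ 4), 0, by ring, ?_⟩
    field_simp; ring

lemma aux_steer_b (θ : ℝ) : steer ![(0 : ℤ), 3, 5, 7] θ =
    ![1, Complex.exp (Complex.I * (Real.pi : ℂ) * (Real.sin θ : ℂ)) ^ 3,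
      Complex.exp (Complex.I * (Real.pi : ℂ) * (Real.sin θ : ℂ)) ^ 5,
      Complex.exp (Complex.I * (Real.pi : ℂ) * (Real.sin θ : ℂ)) ^ 7] := by
  funext i
  fin_cases i
  · simp [steer]
  · simpa [steer] using aux_pow 3 (Real.sin θ)
  · simpa [steer] using aux_pow 5 (Real.sin θ)
  · simpa [steer] using aux_pow 7 (Real.sin θ)

lemma aux_steer_c (θ : ℝ) : steer ![(0 : ℤ), 4, 9] θ =
    ![1, Complex.exp (Complex.I * (Real.pi : ℂ) * (Real.sin θ : ℂ)) ^ 4,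
      Complex.exp (Complex.I * (Real.pi : ℂ) * (Real.sin θ : ℂ)) ^ 9] := by
  funext i
  fin_cases i
  · simp [steer]
  · simpa [steer] using aux_pow 4 (Real.sin θ)
  · simpa [steer] using aux_pow 9 (Real.sin θ)

/-- For `S_b = {0, 3, 5, 7}` and `S_c = {0, 4, 9}`, spatial smoothing identifies `K = 2`
targets: for any two distinct DOAs in `[-π/2, π/2)` and nonzero amplitudes, the spatially
smoothed matrix `Y` has rank `2` and its column space contains `a_{S_b}(φ)` exactly for
`φ ∈ {θ₁, θ₂}`. Moreover, neither sub-array contains a ULA segment with unit spacing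
(no two elements differ by one). -/
theorem stmt_12 :
    (∀ θ : Fin 2 → ℝ, (∀ k, θ k ∈ angleDomain) → Function.Injective θ →
      ∀ x : Fin 2 → ℂ, (∀ k, x k ≠ 0) →
      (manifold ![(0 : ℤ), 3, 5, 7] θ * Matrix.diagonal x *
          (manifold ![(0 : ℤ), 4, 9] θ)ᵀ).rank = 2 ∧
      ∀ φ ∈ angleDomain,
        (steer ![(0 : ℤ), 3, 5, 7] φ ∈
            colSpace (manifold ![(0 : ℤ), 3, 5, 7] θ * Matrix.diagonal x *
              (manifold ![(0 : ℤ), 4, 9] θ)ᵀ) ↔ ∃ k, θ k = φ)) ∧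
    (¬ ∃ a : ℤ, a ∈ ({0, 3, 5, 7} : Set ℤ) ∧ a + 1 ∈ ({0, 3, 5, 7} : Set ℤ)) ∧
    (¬ ∃ a : ℤ, a ∈ ({0, 4, 9} : Set ℤ) ∧ a + 1 ∈ ({0, 4, 9} : Set ℤ)) := by
  refine ⟨?_, by simp, by simp⟩
  intro θ hθ hinj x hx
  set z : ℝ → ℂ := fun t => Complex.exp (Complex.I * (Real.pi : ℂ) * (Real.sin t : ℂ)) with hz
  have hz0 : ∀ t, z t ≠ 0 := fun t => Complex.exp_ne_zero _
  have hB : ∀ t, steer ![(0 : ℤ), 3, 5, 7] t = ![1, z t ^ 3, z t ^ 5, z t ^ 7] := aux_steer_b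
  have hC : ∀ t, steer ![(0 : ℤ), 4, 9] t = ![1, z t ^ 4, z t ^ 9] := aux_steer_c
  have hne : z (θ 0) ≠ z (θ 1) := by
    intro h
    have := hinj (aux_z_inj (hθ 0) (hθ 1) h)
    simp at this
  set B := manifold ![(0 : ℤ), 3, 5, 7] θ with hBdef
  set C := manifold ![(0 : ℤ), 4, 9] θ with hCdef
  have hBv : ∀ y : Fin 2 → ℂ, B *ᵥ y = y 0 • steer ![(0 : ℤ), 3, 5, 7] (θ 0)
      + y 1 • steer ![(0 : ℤ), 3, 5, 7] (θ 1) := by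
    intro y
    funext i
    simp [hBdef, manifold, Matrix.mulVec, dotProduct, Fin.sum_univ_two]
    ring
  have hBinj : Function.Injective B.mulVecLin := by
    rw [← LinearMap.ker_eq_bot, LinearMap.ker_eq_bot']
    intro y hy
    rw [Matrix.mulVecLin_apply, hBv, hB, hB] at hy
    have e0 := congrFun hy 0
    have e1 := congrFun hy 1
    have e2 := congrFun hy 2
    simp at e0 e1 e2
    obtain ⟨h0, h1⟩ := aux_b (hz0 _) hne e0 e1 e2
    funext i
    fin_cases i
    · exact h0
    · exact h1
  have hCsurj : Function.Surjective (Matrix.diagonal x * Cᵀ).mulVecLin := by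
    intro y
    obtain ⟨a, b, c, h1, h2⟩ := aux_c (hz0 (θ 0)) hne (y 0 / x 0) (y 1 / x 1)
    refine ⟨![a, b, c], ?_⟩
    rw [Matrix.mulVecLin_apply, ← Matrix.mulVec_mulVec]
    funext i
    rw [Matrix.mulVec_diagonal]
    have key : ∀ k, (Cᵀ *ᵥ ![a, b, c]) k = a + b * z (θ k) ^ 4 + c * z (θ k) ^ 9 := by
      intro k
      simp [hCdef, manifold, Matrix.mulVec, dotProduct, Fin.sum_univ_three, hC]
      ring
    rw [key]
    fin_cases i
    · have := hx 0
      simp only [Fin.zero_eta, h1]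
      field_simp
    · have := hx 1
      simp only [Fin.mk_one, h2]
      field_simp
  have hrange : LinearMap.range (B * Matrix.diagonal x * Cᵀ).mulVecLin
      = LinearMap.range B.mulVecLin := by
    rw [Matrix.mul_assoc, Matrix.mulVecLin_mul]
    exact LinearMap.range_comp_of_range_eq_top _ (LinearMap.range_eq_top.2 hCsurj)
  refine ⟨?_, ?_⟩
  · rw [Matrix.rank, hrange, LinearMap.finrank_range_of_inj hBinj]
    simp
  intro φ hφ
  rw [colSpace, hrange]
  constructor
  · rintro ⟨y, hy⟩
    rw [Matrix.mulVecLin_apply, hBv, hB, hB, hB] at hy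
    have e0 := congrFun hy 0
    have e1 := congrFun hy 1
    have e2 := congrFun hy 2
    have e3 := congrFun hy 3
    simp at e0 e1 e2 e3
    rcases aux_mem (hz0 _) (hz0 _) (hz0 _) e0 e1 e2 e3 with h | h
    · exact ⟨0, (aux_z_inj hφ (hθ 0) h).symm⟩
    · exact ⟨1, (aux_z_inj hφ (hθ 1) h).symm⟩
  · rintro ⟨k, rfl⟩
    refine ⟨Pi.single k 1, ?_⟩
    rw [Matrix.mulVecLin_apply, Matrix.mulVec_single_one]
    rfl
end

section
/- Let S_b = {0, 1, 3, 4}. Then condition (a) fails for K = 2: there exist 3 distinct angles φ_1, φ_2, φ_3 ∈ [-π/2, π/2) such that the 4×3 manifold matrix A_{S_b}(φ) with entries exp(iπ d sin φ_k), d ∈ {0, 1, 3, 4}, has rank at most 2. -/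
open Matrix

lemma aux_cube (t : ℝ) (k : ℤ) (h : 3 * Real.sin t = 2 * k) :
    Complex.exp (Complex.I * (Real.pi : ℂ) * 3 * (Real.sin t : ℂ)) = 1 := by
  rw [Complex.exp_eq_one_iff]
  refine ⟨k, ?_⟩
  have h' : (3 : ℂ) * (Real.sin t : ℂ) = 2 * k := by exact_mod_cast h
  linear_combination (Complex.I * (Real.pi : ℂ)) * h'

/-- For `S_b = {0, 1, 3, 4}`, condition (a) fails for `K = 2`: there exist three distinct
angles in `[-π/2, π/2)` for which the `4 × 3` manifold matrix has rank at most `2`. -/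
theorem stmt_13 :
    ∃ φ : Fin 3 → ℝ, (∀ i, φ i ∈ angleDomain) ∧ Function.Injective φ ∧
      (manifold ![(0 : ℤ), 1, 3, 4] φ).rank ≤ 2 := by
  have hs : Real.sin (Real.arcsin (2/3)) = 2/3 := Real.sin_arcsin (by norm_num) (by norm_num)
  have hpos : 0 < Real.arcsin (2/3) := Real.arcsin_pos.2 (by norm_num)
  have hlt : Real.arcsin (2/3) < Real.pi / 2 := Real.arcsin_lt_pi_div_two.2 (by norm_num)
  have hpi := Real.pi_pos
  generalize Real.arcsin (2/3) = a at *
  refine ⟨![0, a, -a], ?_, ?_, ?_⟩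
  · intro i
    fin_cases i <;> simp [angleDomain] <;> constructor <;> linarith
  · intro i j hij
    fin_cases i <;> fin_cases j <;> simp at hij ⊢ <;> linarith
  · have hc : ∀ j, Complex.exp (Complex.I * (Real.pi : ℂ) * 3 *
        (Real.sin ((![0, a, -a] : Fin 3 → ℝ) j) : ℂ)) = 1 := by
      intro j
      fin_cases j
      · exact aux_cube _ 0 (by simp)
      · exact aux_cube _ 1 (by simp [hs]; norm_num)
      · exact aux_cube _ (-1) (by simp [hs]; norm_num)
    generalize (![0, a, -a] : Fin 3 → ℝ) = φ at *
    have hM : manifold ![(0 : ℤ), 1, 3, 4] φ =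
        (!![1, 0; 0, 1; 1, 0; 0, 1] : Matrix (Fin 4) (Fin 2) ℂ) *
          manifold ![(0 : ℤ), 1] φ := by
      ext i j
      have h4 : Complex.exp (Complex.I * (Real.pi : ℂ) * 4 * (Real.sin (φ j) : ℂ)) =
          Complex.exp (Complex.I * (Real.pi : ℂ) * (Real.sin (φ j) : ℂ)) := by
        rw [← mul_one (Complex.exp (Complex.I * (Real.pi : ℂ) * (Real.sin (φ j) : ℂ))), ← hc j,
          ← Complex.exp_add]
        congr 1
        ring
      have h3 := hc j
      rw [Matrix.mul_apply, Fin.sum_univ_two]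
      simp only [Complex.ofReal_sin] at h3 h4
      fin_cases i <;> simp [manifold, steer, h3, h4]
    rw [hM]
    exact (Matrix.rank_mul_le_right _ _).trans (Matrix.rank_le_height _)
end
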